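/- arXiv:1110.0104 — 2 statements merged into one kernel-verified Lean document; each statement's English description precedes it below -/
import Mathlib

section
/- Let p = (p₁₀ + p₁₁·z)·u + p₂₁·z·u² and p′ = (p′₁₀ + p′₁₁·z)·u + p′₂₁·z·u² with p₁₀, p₁₁, p₂₁, p′₁₀, p′₁₁, p′₂₁ ∈ ℂ, and suppose (p₁₀, p₁₁) ≠ (0, 0). Then E_p ≅ E_{p′} if and only if there exists λ ∈ ℂ, λ ≠ 0, with p′₁₀ = λ·p₁₀ and p′₁₁ = λ·p₁₁ (with no condition relating p₂₁ and p′₂₁). -/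
set_option synthInstance.maxHeartbeats 1000000
set_option maxHeartbeats 1000000

noncomputable section

/-- The ring of Laurent polynomials `ℂ[z,z⁻¹]`. -/
abbrev Lz : Type := LaurentPolynomial ℂ

/-- The ring `P = ℂ[z,z⁻¹][[u]]` of formal power series in `u` with Laurent
polynomial coefficients. -/
abbrev Pz : Type := PowerSeries Lz

/-- The monomial `z^l u^i` as an element of `P`. -/
def mon (l : ℤ) (i : ℕ) : Pz := PowerSeries.monomial (R := Lz) i (LaurentPolynomial.T l)

/-- The ideal `(u^{n+1})` of `P`. -/
def In (n : ℕ) : Ideal Pz := Ideal.span {(PowerSeries.X : Pz) ^ (n + 1)}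

/-- The ring `A = ℂ[z,z⁻¹][u]/(u^{n+1})`, the coordinate ring of the overlap of the two
standard charts of the `n`-th infinitesimal neighborhood `Z_k^{(n)}`. -/
abbrev Aq (n : ℕ) : Type := Pz ⧸ In n

/-- The quotient map `P → A`. -/
def toA (n : ℕ) : Pz →+* Aq n := Ideal.Quotient.mk (In n)

/-- The monomial `z^l u^i` as an element of `A`. -/
def monA (n : ℕ) (l : ℤ) (i : ℕ) : Aq n := toA n (mon l i)

/-- `O_U ⊆ A`: the `ℂ`-span of the monomials `z^l u^i` with `l ≥ 0`, `0 ≤ i ≤ n`. -/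
def OU (n : ℕ) : Submodule ℂ (Aq n) :=
  Submodule.span ℂ {x | ∃ l : ℤ, ∃ i : ℕ, 0 ≤ l ∧ i ≤ n ∧ x = monA n l i}

/-- `O_V ⊆ A`: the `ℂ`-span of the monomials `z^l u^i` with `l ≤ k·i`, `0 ≤ i ≤ n`. -/
def OV (k n : ℕ) : Submodule ℂ (Aq n) :=
  Submodule.span ℂ {x | ∃ l : ℤ, ∃ i : ℕ, l ≤ k * i ∧ i ≤ n ∧ x = monA n l i}

/-- The submodule `a·S` obtained from a submodule `S` by multiplying by a fixed element `a`. -/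
def msmul {n : ℕ} (a : Aq n) (S : Submodule ℂ (Aq n)) : Submodule ℂ (Aq n) :=
  Submodule.map (LinearMap.mulLeft ℂ a) S

/-- The transition matrix `M_p = ((z^j, p),(0, z^{−j}))` of the bundle `E_p`. -/
def Mmat (n : ℕ) (j : ℤ) (p : Aq n) : Matrix (Fin 2) (Fin 2) (Aq n) :=
  !![monA n j 0, p; 0, monA n (-j) 0]

/-- `E_p ≅ E_{p′}`: there are matrices `A₁` with entries in `O_U` and `B₁` with entries
in `O_V`, with `det A₁` a unit of `O_U` and `det B₁` a unit of `O_V`, with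
`B₁ · M_p = M_{p′} · A₁`. -/
def BundleIso (k n : ℕ) (j : ℤ) (p p' : Aq n) : Prop :=
  ∃ A₁ B₁ : Matrix (Fin 2) (Fin 2) (Aq n),
    (∀ a b : Fin 2, A₁ a b ∈ OU n) ∧ (∀ a b : Fin 2, B₁ a b ∈ OV k n) ∧
    (∃ w ∈ OU n, A₁.det * w = 1) ∧ (∃ w ∈ OV k n, B₁.det * w = 1) ∧
    B₁ * Mmat n j p = Mmat n j p' * A₁

theorem mon_mul (l m : ℤ) (i j : ℕ) : mon l i * mon m j = mon (l+m) (i+j) := by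
  rw [mon, mon, mon, PowerSeries.monomial_mul_monomial, LaurentPolynomial.T_add]

theorem monA_mul (l m : ℤ) (i j : ℕ) : monA 2 l i * monA 2 m j = monA 2 (l+m) (i+j) := by
  simp only [monA, ← map_mul, mon_mul]

theorem monA_one : monA 2 0 0 = 1 := by
  simp [monA, mon]

theorem coeff_mem {f : Pz} (hf : f ∈ In 2) (i : ℕ) (hi : i ≤ 2) : PowerSeries.coeff i f = 0 := by
  rw [In, Ideal.mem_span_singleton, PowerSeries.X_pow_dvd_iff] at hf
  exact hf i (by omega)

theorem monA_three : monA 2 0 3 = 0 := by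
  rw [monA, toA, Ideal.Quotient.eq_zero_iff_mem, In, Ideal.mem_span_singleton]
  rw [PowerSeries.X_pow_dvd_iff]
  intro m hm
  rw [mon, PowerSeries.coeff_monomial, if_neg (by omega)]

/-- coefficient of `u^i` -/
def cf (i : ℕ) (x : Aq 2) : Lz := PowerSeries.coeff i (Quotient.out x)

theorem cf_toA (i : ℕ) (hi : i ≤ 2) (f : Pz) : cf i (toA 2 f) = PowerSeries.coeff i f := by
  have h : toA 2 (Quotient.out (toA 2 f)) = toA 2 f := Quotient.out_eq _
  have h2 := coeff_mem ((Ideal.Quotient.eq (I := In 2)).1 h) i hi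
  rw [map_sub, sub_eq_zero] at h2
  exact h2

theorem toA_surj (x : Aq 2) : ∃ f, toA 2 f = x := Ideal.Quotient.mk_surjective x

theorem cf_add (i : ℕ) (hi : i ≤ 2) (x y : Aq 2) : cf i (x + y) = cf i x + cf i y := by
  obtain ⟨f, rfl⟩ := toA_surj x
  obtain ⟨g, rfl⟩ := toA_surj y
  rw [← map_add, cf_toA i hi, cf_toA i hi, cf_toA i hi, map_add]

theorem cf_sub (i : ℕ) (hi : i ≤ 2) (x y : Aq 2) : cf i (x - y) = cf i x - cf i y := by
  obtain ⟨f, rfl⟩ := toA_surj x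
  obtain ⟨g, rfl⟩ := toA_surj y
  rw [← map_sub, cf_toA i hi, cf_toA i hi, cf_toA i hi, map_sub]

theorem cf_smul (i : ℕ) (hi : i ≤ 2) (c : ℂ) (x : Aq 2) : cf i (c • x) = c • cf i x := by
  obtain ⟨f, rfl⟩ := toA_surj x
  have : c • toA 2 f = toA 2 (c • f) := rfl
  rw [this, cf_toA i hi, cf_toA i hi]
  rfl

theorem cf0_mul (x y : Aq 2) : cf 0 (x * y) = cf 0 x * cf 0 y := by
  obtain ⟨f, rfl⟩ := toA_surj x
  obtain ⟨g, rfl⟩ := toA_surj y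
  rw [← map_mul]
  simp only [cf_toA 0 (by omega)]
  simp

theorem cf1_mul (x y : Aq 2) : cf 1 (x * y) = cf 0 x * cf 1 y + cf 1 x * cf 0 y := by
  obtain ⟨f, rfl⟩ := toA_surj x
  obtain ⟨g, rfl⟩ := toA_surj y
  rw [← map_mul]
  simp only [cf_toA 0 (by omega), cf_toA 1 (by omega)]
  rw [PowerSeries.coeff_mul]
  simp [Finset.Nat.antidiagonal_succ]

theorem cf_monA (i : ℕ) (hi : i ≤ 2) (l : ℤ) (j : ℕ) :
    cf i (monA 2 l j) = if i = j then LaurentPolynomial.T l else 0 := by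
  rw [monA, cf_toA i hi, mon, PowerSeries.coeff_monomial]

theorem cf0_one : cf 0 1 = 1 := by
  rw [← monA_one, cf_monA 0 (by omega)]; simp

theorem cf_zero (i : ℕ) (hi : i ≤ 2) : cf i 0 = 0 := by
  rw [← map_zero (toA 2), cf_toA i hi, map_zero]

theorem smulA (c : ℂ) (x : Aq 2) : c • x = algebraMap ℂ (Aq 2) c * x := by
  exact Algebra.smul_def c x

theorem OU_cf {x : Aq 2} (hx : x ∈ OU 2) (i : ℕ) (hi : i ≤ 2) (l : ℤ) (hl : l < 0) :
    (cf i x).coeff l = 0 := by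
  unfold OU at hx
  induction hx using Submodule.span_induction with
  | mem x h =>
    obtain ⟨m, j, hm, hj, rfl⟩ := h
    rw [cf_monA i hi]
    split_ifs
    · rw [LaurentPolynomial.T_apply, if_neg (by omega)]
    · rfl
  | zero => rw [cf_zero i hi]; rfl
  | add x y _ _ h1 h2 => rw [cf_add i hi, AddMonoidAlgebra.coeff_add, Finsupp.add_apply, h1, h2, add_zero]
  | smul c x _ h => rw [cf_smul i hi, AddMonoidAlgebra.coeff_smul, Finsupp.smul_apply, h, smul_zero]

theorem OV_cf {x : Aq 2} (hx : x ∈ OV 1 2) (i : ℕ) (hi : i ≤ 2) (l : ℤ) (hl : (i : ℤ) < l) :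
    (cf i x).coeff l = 0 := by
  unfold OV at hx
  induction hx using Submodule.span_induction with
  | mem x h =>
    obtain ⟨m, j, hm, hj, rfl⟩ := h
    rw [cf_monA i hi]
    split_ifs with h
    · subst h
      rw [LaurentPolynomial.T_apply, if_neg (by push_cast at hm; omega)]
    · rfl
  | zero => rw [cf_zero i hi]; rfl
  | add x y _ _ h1 h2 => rw [cf_add i hi, AddMonoidAlgebra.coeff_add, Finsupp.add_apply, h1, h2, add_zero]
  | smul c x _ h => rw [cf_smul i hi, AddMonoidAlgebra.coeff_smul, Finsupp.smul_apply, h, smul_zero]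

theorem coeff_mulT (f : Lz) (m l : ℤ) :
    (f * LaurentPolynomial.T m).coeff l = f.coeff (l - m) := by
  rw [LaurentPolynomial.T, AddMonoidAlgebra.coeff_mul_single_apply, mul_one, sub_eq_add_neg]

theorem coeff_Tmul (f : Lz) (m l : ℤ) :
    (LaurentPolynomial.T m * f).coeff l = f.coeff (l - m) := by
  rw [LaurentPolynomial.T_mul, coeff_mulT]

theorem const_of (f : Lz) (h1 : ∀ l < 0, f.coeff l = 0) (h2 : ∀ l > 0, f.coeff l = 0) :
    f = LaurentPolynomial.C (f.coeff 0) := by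
  ext l
  rw [LaurentPolynomial.C_apply]
  split_ifs with h
  · rw [h]
  · rcases lt_or_gt_of_ne h with h | h
    · exact h1 l h
    · exact h2 l h

theorem coeff_Cmul (a : ℂ) (f : Lz) (l : ℤ) :
    (LaurentPolynomial.C a * f).coeff l = a * f.coeff l := by
  rw [← LaurentPolynomial.smul_eq_C_mul, AddMonoidAlgebra.coeff_smul, Finsupp.smul_apply, smul_eq_mul]

theorem coeff_mulC (a : ℂ) (f : Lz) (l : ℤ) :
    (f * LaurentPolynomial.C a).coeff l = f.coeff l * a := by
  rw [mul_comm, coeff_Cmul, mul_comm]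

theorem cf0_p (a b c : ℂ) : cf 0 (a • monA 2 0 1 + b • monA 2 1 1 + c • monA 2 1 2) = 0 := by
  simp only [cf_add 0 (by omega), cf_smul 0 (by omega), cf_monA 0 (by omega)]
  simp

theorem cf1_p (a b c : ℂ) : cf 1 (a • monA 2 0 1 + b • monA 2 1 1 + c • monA 2 1 2) =
    a • LaurentPolynomial.T 0 + b • LaurentPolynomial.T 1 := by
  simp only [cf_add 1 (by omega), cf_smul 1 (by omega), cf_monA 1 (by omega)]
  simp

theorem necessity (p10 p11 p21 q10 q11 q21 : ℂ)
    (h : BundleIso 1 2 2 (p10 • monA 2 0 1 + p11 • monA 2 1 1 + p21 • monA 2 1 2)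
      (q10 • monA 2 0 1 + q11 • monA 2 1 1 + q21 • monA 2 1 2)) :
    ∃ lam : ℂ, lam ≠ 0 ∧ q10 = lam * p10 ∧ q11 = lam * p11 := by
  obtain ⟨A, B, hA, hB, ⟨w, hw, hdet⟩, -, hM⟩ := h
  have p0 := cf0_p p10 p11 p21
  have p1 := cf1_p p10 p11 p21
  have q0 := cf0_p q10 q11 q21
  have q1 := cf1_p q10 q11 q21
  generalize (p10 • monA 2 0 1 + p11 • monA 2 1 1 + p21 • monA 2 1 2) = p at *
  generalize (q10 • monA 2 0 1 + q11 • monA 2 1 1 + q21 • monA 2 1 2) = q at *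
  have e11 := congrFun (congrFun hM 0) 0
  have e12 := congrFun (congrFun hM 0) 1
  have e22 := congrFun (congrFun hM 1) 1
  simp only [Mmat, Matrix.mul_apply, Fin.sum_univ_two, Matrix.of_apply, Matrix.cons_val', Matrix.cons_val_zero,
    Matrix.cons_val_one, Matrix.cons_val_fin_one, mul_zero, zero_mul, add_zero, zero_add] at e11 e12 e22
  have f11 := congrArg (cf 0) e11
  have f12 := congrArg (cf 0) e12
  have f22 := congrArg (cf 0) e22
  have g12 := congrArg (cf 1) e12
  simp only [cf_add 0 (by omega), cf_add 1 (by omega), cf0_mul, cf1_mul, cf_monA 0 (by omega), cf_monA 1 (by omega), p0, p1, q0, q1,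
    if_true, mul_zero, zero_mul, add_zero, zero_add, one_ne_zero, if_false] at f11 f12 f22 g12
  have ha : cf 0 (A 0 0) = LaurentPolynomial.C ((cf 0 (A 0 0)).coeff 0) := by
    apply const_of
    · intro l hl; exact OU_cf (hA 0 0) 0 (by omega) l hl
    · intro l hl
      have := congrArg (fun f : Lz => f.coeff (l + 2)) f11
      simp only [coeff_mulT, coeff_Tmul, add_sub_cancel_right] at this
      rw [← this]
      exact OV_cf (hB 0 0) 0 (by omega) l (by simpa using hl)
  have hab : cf 0 (B 0 0) = cf 0 (A 0 0) := by
    ext l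
    have := congrArg (fun f : Lz => f.coeff (l + 2)) f11
    simpa only [coeff_mulT, coeff_Tmul, add_sub_cancel_right] using this
  have hd : cf 0 (A 1 1) = LaurentPolynomial.C ((cf 0 (A 1 1)).coeff 0) := by
    apply const_of
    · intro l hl; exact OU_cf (hA 1 1) 0 (by omega) l hl
    · intro l hl
      have := congrArg (fun f : Lz => f.coeff (l + -2)) f22
      simp only [coeff_mulT, coeff_Tmul, add_sub_cancel_right] at this
      rw [← this]
      exact OV_cf (hB 1 1) 0 (by omega) l (by simpa using hl)
  have hb : cf 0 (A 0 1) = 0 := by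
    ext l
    rcases lt_or_ge l 0 with hl | hl
    · rw [OU_cf (hA 0 1) 0 (by omega) l hl]; rfl
    · have := congrArg (fun f : Lz => f.coeff (l + 2)) f12
      simp only [coeff_mulT, coeff_Tmul, add_sub_cancel_right] at this
      rw [← this, OV_cf (hB 0 1) 0 (by omega) _ (by push_cast; omega)]; rfl
  rw [hab, ha, hd] at g12
  rw [Matrix.det_fin_two] at hdet
  have hdet0 := congrArg (cf 0) hdet
  simp only [cf0_mul, cf_sub 0 (by omega), hb, cf0_one, zero_mul, sub_zero] at hdet0
  rw [ha, hd] at hdet0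
  generalize (cf 0 (A 0 0)).coeff 0 = a at *
  generalize (cf 0 (A 1 1)).coeff 0 = d at *
  have hn := congrArg (fun f : Lz => f.coeff 0) hdet0
  simp only [← map_mul, coeff_Cmul] at hn
  have h1 : (1 : Lz).coeff 0 = 1 := by
    rw [← LaurentPolynomial.T_zero, LaurentPolynomial.T_apply]; simp
  rw [h1] at hn
  have ha0 : a ≠ 0 := by rintro rfl; simp at hn
  have hd0 : d ≠ 0 := by rintro rfl; simp at hn
  have k0 := congrArg (fun f : Lz => f.coeff 0) g12
  have k1 := congrArg (fun f : Lz => f.coeff 1) g12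
  simp only [AddMonoidAlgebra.coeff_add, Finsupp.add_apply, AddMonoidAlgebra.coeff_smul, Finsupp.smul_apply,
    coeff_mulT, coeff_Tmul, coeff_Cmul, coeff_mulC, LaurentPolynomial.T_apply] at k0 k1
  rw [OV_cf (hB 0 1) 1 (by omega) _ (by norm_num), OU_cf (hA 0 1) 1 (by omega) _ (by norm_num)] at k0 k1
  simp at k0 k1
  refine ⟨a / d, div_ne_zero ha0 hd0, ?_, ?_⟩
  · field_simp
    linear_combination -k0
  · field_simp
    linear_combination -k1

theorem monA_eq (l : ℤ) (i : ℕ) (hl : 0 ≤ l) : monA 2 l i = monA 2 1 0 ^ l.toNat * monA 2 0 1 ^ i := by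
  have h1 : ∀ n : ℕ, monA 2 1 0 ^ n = monA 2 n 0 := by
    intro n
    induction n with
    | zero => simp [monA_one]
    | succ n ih => rw [pow_succ, ih, monA_mul]; push_cast; rfl
  have h2 : ∀ n : ℕ, monA 2 0 1 ^ n = monA 2 0 n := by
    intro n
    induction n with
    | zero => simp [monA_one]
    | succ n ih => rw [pow_succ, ih, monA_mul]; rfl
  rw [h1, h2, monA_mul]
  congr 1 <;> omega

theorem OU_mon (c : ℂ) (l : ℤ) (i : ℕ) (hl : 0 ≤ l) (hi : i ≤ 2) : c • monA 2 l i ∈ OU 2 :=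
  Submodule.smul_mem _ _ (Submodule.subset_span ⟨l, i, hl, hi, rfl⟩)

theorem OV_mon (c : ℂ) (l : ℤ) (i : ℕ) (hl : l ≤ i) (hi : i ≤ 2) : c • monA 2 l i ∈ OV 1 2 :=
  Submodule.smul_mem _ _ (Submodule.subset_span ⟨l, i, by simpa using hl, hi, rfl⟩)

theorem sufficiency (p10 p11 p21 q21 lam : ℂ) (hne : ¬(p10 = 0 ∧ p11 = 0)) (hl : lam ≠ 0) :
    BundleIso 1 2 2 (p10 • monA 2 0 1 + p11 • monA 2 1 1 + p21 • monA 2 1 2)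
      ((lam * p10) • monA 2 0 1 + (lam * p11) • monA 2 1 1 + q21 • monA 2 1 2) := by
  obtain ⟨s, t, hst⟩ : ∃ s t : ℂ, p10 * t + p11 * s = q21 - lam * p21 := by
    by_cases h : p10 = 0
    · have h' : p11 ≠ 0 := fun h' => hne ⟨h, h'⟩
      exact ⟨(q21 - lam * p21) / p11, 0, by field_simp; ring⟩
    · exact ⟨0, (q21 - lam * p21) / p10, by field_simp; ring⟩
  obtain ⟨m, hm⟩ : ∃ m : ℂ, lam * m = 1 := ⟨lam⁻¹, mul_inv_cancel₀ hl⟩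
  have hU : monA 2 0 1 ^ 3 = 0 := by
    have := monA_eq 0 3 le_rfl
    rw [monA_three] at this
    simpa using this.symm
  have hZ : monA 2 1 0 ^ 2 * monA 2 (-2) 0 = 1 := by
    have := monA_eq 2 0 (by norm_num)
    rw [pow_zero, mul_one] at this
    change _ = monA 2 1 0 ^ 2 at this
    rw [← this, monA_mul, ← monA_one]; rfl
  have hmK := congrArg (algebraMap ℂ (Aq 2)) hm
  have hstK := congrArg (algebraMap ℂ (Aq 2)) hst
  simp only [map_mul, map_add, map_sub, map_one] at hmK hstK
  let a : Aq 2 := lam • monA 2 0 0 + s • monA 2 0 1 + t • monA 2 1 1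
  let ai : Aq 2 := m • monA 2 0 0 + (-(m^2) * s) • monA 2 0 1 + (-(m^2)*t) • monA 2 1 1
    + (m^3*s^2) • monA 2 0 2 + (2*m^3*s*t) • monA 2 1 2 + (m^3*t^2) • monA 2 2 2
  have haU : a ∈ OU 2 := by
    refine add_mem (add_mem ?_ ?_) ?_ <;> apply OU_mon <;> norm_num
  have haV : a ∈ OV 1 2 := by
    refine add_mem (add_mem ?_ ?_) ?_ <;> apply OV_mon <;> norm_num
  have haiU : ai ∈ OU 2 := by
    refine add_mem (add_mem (add_mem (add_mem (add_mem ?_ ?_) ?_) ?_) ?_) ?_ <;> apply OU_mon <;> norm_num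
  have haiV : ai ∈ OV 1 2 := by
    refine add_mem (add_mem (add_mem (add_mem (add_mem ?_ ?_) ?_) ?_) ?_) ?_ <;> apply OV_mon <;> norm_num
  have h1U : (1 : Aq 2) ∈ OU 2 := by
    have := OU_mon 1 0 0 (by norm_num) (by norm_num)
    rwa [one_smul, monA_one] at this
  have h1V : (1 : Aq 2) ∈ OV 1 2 := by
    have := OV_mon 1 0 0 (by norm_num) (by norm_num)
    rwa [one_smul, monA_one] at this
  have e00 := monA_one
  have e11 := monA_eq 1 1 (by norm_num)
  have e02 := monA_eq 0 2 (by norm_num)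
  have e12 := monA_eq 1 2 (by norm_num)
  have e22 := monA_eq 2 2 (by norm_num)
  have e20 := monA_eq 2 0 (by norm_num)
  simp only [Int.toNat_zero, Int.toNat_one, pow_one, pow_zero, one_mul, mul_one,
    show (2 : ℤ).toNat = 2 from rfl] at e11 e02 e12 e22 e20
  have hinv : a * ai = 1 := by
    simp only [a, ai, e00, e11, e02, e12, e22, smulA, map_mul, map_neg, map_pow, map_ofNat]
    generalize monA 2 0 1 = U at *
    generalize monA 2 1 0 = Z at *
    generalize algebraMap ℂ (Aq 2) lam = L at *
    generalize algebraMap ℂ (Aq 2) m = M at *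
    generalize algebraMap ℂ (Aq 2) s = S at *
    generalize algebraMap ℂ (Aq 2) t = T at *
    clear * - hU hmK
    linear_combination (1 - M * (S + T * Z) * U + M^2 * (S+T*Z)^2 * U^2) * hmK + M^3 * (S+T*Z)^3 * hU
  refine ⟨!![a, (p11 * t) • monA 2 0 2; 0, 1], !![a, (-(p10 * s)) • monA 2 2 2; 0, 1], ?_, ?_,
    ⟨ai, haiU, ?_⟩, ⟨ai, haiV, ?_⟩, ?_⟩
  · intro i j
    fin_cases i <;> fin_cases j
    · exact haU
    · exact OU_mon _ _ _ (by norm_num) (by norm_num)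
    · exact zero_mem _
    · exact h1U
  · intro i j
    fin_cases i <;> fin_cases j
    · exact haV
    · exact OV_mon _ _ _ (by norm_num) (by norm_num)
    · exact zero_mem _
    · exact h1V
  · rw [Matrix.det_fin_two_of, mul_one, mul_zero, sub_zero, hinv]
  · rw [Matrix.det_fin_two_of, mul_one, mul_zero, sub_zero, hinv]
  · rw [Mmat, Mmat, Matrix.mul_fin_two, Matrix.mul_fin_two]
    have key : a * (p10 • monA 2 0 1 + p11 • monA 2 1 1 + p21 • monA 2 1 2)
        + (-(p10 * s)) • monA 2 2 2 * monA 2 (-2) 0 = monA 2 2 0 * ((p11 * t) • monA 2 0 2)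
        + ((lam * p10) • monA 2 0 1 + (lam * p11) • monA 2 1 1 + q21 • monA 2 1 2) * 1 := by
      simp only [a, e00, e11, e02, e12, e22, e20, smulA, map_mul, map_neg]
      generalize monA 2 0 1 = U at *
      generalize monA 2 1 0 = Z at *
      generalize monA 2 (-2) 0 = W at *
      generalize algebraMap ℂ (Aq 2) lam = L at *
      generalize algebraMap ℂ (Aq 2) s = S at *
      generalize algebraMap ℂ (Aq 2) t = T at *
      generalize algebraMap ℂ (Aq 2) p10 = P0 at *
      generalize algebraMap ℂ (Aq 2) p11 = P1 at *
      generalize algebraMap ℂ (Aq 2) p21 = P2 at *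
      generalize algebraMap ℂ (Aq 2) q21 = Q2 at *
      clear * - hU hZ hstK
      linear_combination (-P0 * S * U^2) * hZ + (Z * U^2) * hstK + (P2 * Z * (S + T * Z)) * hU
    rw [key]
    simp [mul_comm]

/-- on `Z_1^{(2)}` (`k = 1`, `j = 2`, `n = 2`), for
`p = (p₁₀ + p₁₁ z)u + p₂₁ z u²` and `p′ = (p′₁₀ + p′₁₁ z)u + p′₂₁ z u²` with
`(p₁₀, p₁₁) ≠ (0,0)`: `E_p ≅ E_{p′}` iff there is `λ ≠ 0` with `p′₁₀ = λ p₁₀` and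
`p′₁₁ = λ p₁₁` (with no condition relating `p₂₁` and `p′₂₁`). -/
theorem statement12 (p10 p11 p21 q10 q11 q21 : ℂ) (hne : ¬(p10 = 0 ∧ p11 = 0)) :
    BundleIso 1 2 2 (p10 • monA 2 0 1 + p11 • monA 2 1 1 + p21 • monA 2 1 2)
      (q10 • monA 2 0 1 + q11 • monA 2 1 1 + q21 • monA 2 1 2) ↔
    ∃ lam : ℂ, lam ≠ 0 ∧ q10 = lam * p10 ∧ q11 = lam * p11 := by
  constructor
  · exact necessity p10 p11 p21 q10 q11 q21
  · rintro ⟨lam, hl, rfl, rfl⟩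
    exact sufficiency p10 p11 p21 q21 lam hne hl
end
end

section
/- Let Φ : ℂ[[x₀, x₁, …, x_k]] → P be the continuous ℂ-algebra homomorphism from the formal power series ring in k+1 variables given by substituting x_i ↦ z^i·u for 0 ≤ i ≤ k (this substitution is well defined since each z^i·u lies in the ideal u·P). Then the image of Φ is exactly the subalgebra O_U^∞ ∩ O_V^∞ (the ring of global functions on the formal neighborhood Ẑ_k), and the kernel of Φ is the ideal of ℂ[[x₀, …, x_k]] generated by the elements x_i·x_j − x_{i+1}·x_{j−1} for 0 ≤ i ≤ k − 2 and i + 2 ≤ j ≤ k. In particular the ring of global functions on Ẑ_k is isomorphic to ℂ[[x₀,…,x_k]] modulo that ideal. -/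
set_option synthInstance.maxHeartbeats 1000000
set_option maxHeartbeats 1000000

noncomputable section

/-- The coefficient of `z^l` in a Laurent polynomial, as a `ℂ`-linear map. -/
def coeffL (l : ℤ) : Lz →ₗ[ℂ] ℂ :=
  (Finsupp.lapply l).comp (AddMonoidAlgebra.coeffLinearEquiv ℂ).toLinearMap

/-- The coefficient of `z^l u^i` in an element of `P`, as a `ℂ`-linear map. -/
def coeffP (l : ℤ) (i : ℕ) : Pz →ₗ[ℂ] ℂ :=
  (coeffL l).comp ((PowerSeries.coeff (R := Lz) i).restrictScalars ℂ)

/-- `O_U^∞ ⊆ P`: elements whose `u^i`-coefficient, for every `i`, is supported in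
`z`-degrees `≥ 0`. -/
def OUinf : Submodule ℂ Pz where
  carrier := {f | ∀ (i : ℕ) (l : ℤ), l < 0 → coeffP l i f = 0}
  add_mem' := by
    intro f g hf hg i l hl
    simp only [Set.mem_setOf_eq] at *
    rw [map_add, hf i l hl, hg i l hl, add_zero]
  zero_mem' := by intro i l _; simp
  smul_mem' := by
    intro c f hf i l hl
    simp only [Set.mem_setOf_eq] at *
    rw [map_smul, hf i l hl, smul_zero]

/-- `O_V^∞ ⊆ P`: elements whose `u^i`-coefficient, for every `i`, is supported in
`z`-degrees `≤ k·i`. -/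
def OVinf (k : ℕ) : Submodule ℂ Pz where
  carrier := {f | ∀ (i : ℕ) (l : ℤ), (k : ℤ) * i < l → coeffP l i f = 0}
  add_mem' := by
    intro f g hf hg i l hl
    simp only [Set.mem_setOf_eq] at *
    rw [map_add, hf i l hl, hg i l hl, add_zero]
  zero_mem' := by intro i l _; simp
  smul_mem' := by
    intro c f hf i l hl
    simp only [Set.mem_setOf_eq] at *
    rw [map_smul, hf i l hl, smul_zero]

/-- The submodule `a·S` obtained from a submodule `S ⊆ P` by multiplying by `a`. -/
def msmulP (a : Pz) (S : Submodule ℂ Pz) : Submodule ℂ Pz :=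
  Submodule.map (LinearMap.mulLeft ℂ a) S


theorem pair_eq {A : Type*} [CommMonoid A] (k : ℕ) (y : ℕ → A)
    (hy : ∀ i j, i + 2 ≤ j → j ≤ k → y i * y j = y (i+1) * y (j-1)) (d : ℕ) :
    ∀ i j, i + d ≤ j → j ≤ k → y i * y j = y (i+d) * y (j-d) := by
  induction d with
  | zero => intro i j _ _; simp
  | succ d ih =>
    intro i j h1 h2
    by_cases h : i + 2 ≤ j
    · rw [hy i j h h2]
      by_cases h3 : i + 1 + d ≤ j - 1
      · rw [ih (i+1) (j-1) h3 (by omega)]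
        congr 2 <;> omega
      · -- i+1+d = j or so
        have : j = i + 1 + d := by omega
        subst this
        have e1 : i + 1 + d - 1 = i + d := by omega
        have e2 : i + 1 + d - (d + 1) = i := by omega
        rw [← hy i _ h h2, e2, mul_comm]
        congr 2
        omega
    · have h4 : d = 0 := by omega
      have h5 : j = i + 1 := by omega
      subst h4 h5
      simp [mul_comm]

theorem exists_extract {A : Type*} [CommMonoid A] (k : ℕ) (y : ℕ → A)
    (hy : ∀ i j, i + 2 ≤ j → j ≤ k → y i * y j = y (i+1) * y (j-1))
    (s : Multiset ℕ) (hs : ∀ i ∈ s, i ≤ k) (a : ℕ)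
    (h1 : s.card * a ≤ s.sum) (h2 : s.sum < s.card * (a + 1)) :
    ∃ s' : Multiset ℕ, (∀ i ∈ s', i ≤ k) ∧ s'.card + 1 = s.card ∧ s'.sum + a = s.sum ∧
      (s.map y).prod = y a * (s'.map y).prod := by
  by_cases ha : a ∈ s
  · obtain ⟨t, rfl⟩ := Multiset.exists_cons_of_mem ha
    exact ⟨t, fun i hi => hs i (Multiset.mem_cons_of_mem hi), by simp, by simp [add_comm], by simp⟩
  · have hi : ∃ i ∈ s, i < a := by
      by_contra! hc
      have := Multiset.card_nsmul_le_sum (s := s) (a := a + 1) (fun x hx =>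
        lt_of_le_of_ne (hc x hx) (by rintro rfl; exact ha hx))
      rw [smul_eq_mul] at this
      omega
    have hj : ∃ j ∈ s, a < j := by
      by_contra! hc
      obtain ⟨i, his, hia⟩ := hi
      obtain ⟨t, rfl⟩ := Multiset.exists_cons_of_mem his
      have := Multiset.sum_le_card_nsmul t a (fun x hx => hc x (Multiset.mem_cons_of_mem hx))
      simp only [Multiset.card_cons, Multiset.sum_cons, smul_eq_mul] at *
      nlinarith
    obtain ⟨i, his, hia⟩ := hi
    obtain ⟨j, hjs, hja⟩ := hj
    obtain ⟨t, rfl⟩ := Multiset.exists_cons_of_mem his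
    have hjt : j ∈ t := by
      rcases Multiset.mem_cons.1 hjs with h | h
      · omega
      · exact h
    obtain ⟨r, rfl⟩ := Multiset.exists_cons_of_mem hjt
    have hjk := hs j hjs
    refine ⟨(j - (a - i)) ::ₘ r, ?_, by simp, ?_, ?_⟩
    · intro x hx
      rcases Multiset.mem_cons.1 hx with h | h
      · omega
      · exact hs x (by simp [h])
    · simp only [Multiset.sum_cons]; omega
    · have := pair_eq k y hy (a - i) i j (by omega) hjk
      simp only [Multiset.map_cons, Multiset.prod_cons]
      rw [← mul_assoc, this, mul_assoc]
      congr 2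
      omega

theorem prod_eq_of_card_sum {A : Type*} [CommMonoid A] (k : ℕ) (y : ℕ → A)
    (hy : ∀ i j, i + 2 ≤ j → j ≤ k → y i * y j = y (i+1) * y (j-1)) (N : ℕ) :
    ∀ (s t : Multiset ℕ), (∀ i ∈ s, i ≤ k) → (∀ i ∈ t, i ≤ k) → s.card = N → t.card = N →
      s.sum = t.sum → (s.map y).prod = (t.map y).prod := by
  induction N with
  | zero =>
    intro s t _ _ h1 h2 _
    rw [Multiset.card_eq_zero.1 h1, Multiset.card_eq_zero.1 h2]
  | succ N ih =>
    intro s t hs ht h1 h2 h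
    have e1 : (N+1) * (s.sum / (N+1)) ≤ s.sum := Nat.mul_div_le _ _
    have e2 : s.sum < (N+1) * (s.sum / (N+1) + 1) := Nat.lt_mul_div_succ _ (by omega)
    obtain ⟨s', a1, a2, a3, a4⟩ := exists_extract k y hy s hs (s.sum / (N+1))
      (by rw [h1]; exact e1) (by rw [h1]; exact e2)
    obtain ⟨t', b1, b2, b3, b4⟩ := exists_extract k y hy t ht (s.sum / (N+1))
      (by rw [h2, ← h]; exact e1) (by rw [h2, ← h]; exact e2)
    rw [a4, b4, ih s' t' a1 b1 (by omega) (by omega) (by omega)]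

open MvPowerSeries in
theorem mem_span_of_components {σ ι : Type*} [Fintype ι] (g : ι → MvPowerSeries σ ℂ)
    (hg : ∀ i a, coeff a (g i) ≠ 0 → a.degree = 2)
    (f : MvPowerSeries σ ℂ)
    (hf : ∀ N : ℕ, ∃ h ∈ Ideal.span (Set.range g), ∀ m : σ →₀ ℕ, m.degree = N →
      coeff m h = coeff m f) : f ∈ Ideal.span (Set.range g) := by
  classical
  choose h hh1 hh2 using hf
  have : ∀ N, ∃ c : ι → MvPowerSeries σ ℂ, ∑ i, c i * g i = h N := fun N => by
    exact Ideal.mem_span_range_iff_exists_fun.1 (hh1 N)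
  choose c hc using this
  let C : ι → MvPowerSeries σ ℂ := fun i m => coeff m (c (m.degree + 2) i)
  have hC : ∀ i m, coeff m (C i) = coeff m (c (m.degree + 2) i) := fun i m => rfl
  refine Ideal.mem_span_range_iff_exists_fun.2 ⟨C, ?_⟩
  ext m
  rw [← hh2 m.degree m rfl, ← hc, map_sum, map_sum]
  refine Finset.sum_congr rfl fun i _ => ?_
  rw [coeff_mul, coeff_mul]
  refine Finset.sum_congr rfl fun p hp => ?_
  by_cases h0 : coeff p.2 (g i) = 0
  · simp [h0]
  · have h2 := hg i _ h0
    have : p.1.degree + 2 = m.degree := by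
      rw [← Finset.HasAntidiagonal.mem_antidiagonal.1 hp, map_add, h2]
    rw [hC, this]

theorem exists_nf (k N : ℕ) : ∀ l : ℕ, l ≤ k * N → ∃ m : Fin (k+1) → ℕ,
    ∑ i, m i = N ∧ ∑ i : Fin (k+1), (i : ℕ) * m i = l := by
  induction N with
  | zero => intro l hl; exact ⟨0, by simp, by simp at hl; simp [hl]⟩
  | succ N ih =>
    intro l hl
    have : k * (N+1) = k * N + k := by ring
    obtain ⟨m, h1, h2⟩ := ih (l - min l k) (by omega)
    refine ⟨m + Pi.single ⟨min l k, by omega⟩ 1, ?_, ?_⟩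
    · simp [Finset.sum_add_distrib, h1]
    · simp [Finset.sum_add_distrib, h2, mul_add, Pi.single_apply]

theorem monomial_congr {A : Type*} [CommRing A] (k : ℕ)
    (q : MvPowerSeries (Fin (k+1)) ℂ →+* A) (y : ℕ → A)
    (hyX : ∀ i : Fin (k+1), y i = q (MvPowerSeries.X i))
    (hy : ∀ i j, i + 2 ≤ j → j ≤ k → y i * y j = y (i+1) * y (j-1))
    (m m' : Fin (k+1) → ℕ) (h1 : ∑ i, m i = ∑ i, m' i)
    (h2 : ∑ i : Fin (k+1), (i : ℕ) * m i = ∑ i : Fin (k+1), (i : ℕ) * m' i) :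
    q (MvPowerSeries.monomial (Finsupp.equivFunOnFinite.symm m) 1) =
    q (MvPowerSeries.monomial (Finsupp.equivFunOnFinite.symm m') 1) := by
  have key : ∀ m : Fin (k+1) → ℕ, ∃ s : Multiset ℕ, (∀ i ∈ s, i ≤ k) ∧ s.card = ∑ i, m i ∧
      s.sum = ∑ i : Fin (k+1), (i : ℕ) * m i ∧
      q (MvPowerSeries.monomial (Finsupp.equivFunOnFinite.symm m) 1) = (s.map y).prod := by
    intro m
    refine ⟨(Finsupp.toMultiset (Finsupp.equivFunOnFinite.symm m)).map (Fin.val : Fin (k+1) → ℕ),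
      ?_, ?_, ?_, ?_⟩
    · intro i hi
      obtain ⟨a, _, rfl⟩ := Multiset.mem_map.1 hi
      omega
    · rw [Multiset.card_map, Finsupp.card_toMultiset, Finsupp.sum_fintype _ _ (by simp)]
      simp
    · rw [Finsupp.toMultiset_apply, Finsupp.sum_fintype _ _ (by simp)]
      have := map_sum (Multiset.mapAddMonoidHom (Fin.val : Fin (k+1) → ℕ))
        (fun i => (Finsupp.equivFunOnFinite.symm m) i • ({i} : Multiset (Fin (k+1)))) Finset.univ
      simp only [Multiset.coe_mapAddMonoidHom] at this
      rw [this, Multiset.sum_sum]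
      refine Finset.sum_congr rfl fun i _ => ?_
      simp [Multiset.map_nsmul, Multiset.sum_nsmul, mul_comm]
    · rw [Multiset.map_map, Finsupp.toMultiset_apply, Finsupp.sum_fintype _ _ (by simp)]
      rw [MvPowerSeries.monomial_one_eq, Finsupp.prod_fintype _ _ (by simp), map_prod]
      have := map_sum (Multiset.mapAddMonoidHom (y ∘ (Fin.val : Fin (k+1) → ℕ)))
        (fun i => (Finsupp.equivFunOnFinite.symm m) i • ({i} : Multiset (Fin (k+1)))) Finset.univ
      simp only [Multiset.coe_mapAddMonoidHom] at this
      rw [this, Multiset.prod_sum]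
      refine Finset.prod_congr rfl fun i _ => ?_
      simp [Multiset.map_nsmul, Multiset.prod_nsmul, hyX]
  obtain ⟨s, a1, a2, a3, a4⟩ := key m
  obtain ⟨t, b1, b2, b3, b4⟩ := key m'
  rw [a4, b4]
  exact prod_eq_of_card_sum k y hy _ s t a1 b1 rfl (by omega) (by omega)

theorem coeffL_T (l l' : ℤ) : coeffL l (LaurentPolynomial.T l') = if l' = l then 1 else 0 := by
  exact Finsupp.single_apply

theorem coeffL_ext (a b : Lz) (h : ∀ l, coeffL l a = coeffL l b) : a = b := by
  apply (AddMonoidAlgebra.coeffLinearEquiv (M := ℤ) (R := ℂ) (S := ℂ)).injective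
  ext l
  exact h l

theorem coeffP_Phi (k : ℕ) (Φ : MvPowerSeries (Fin (k + 1)) ℂ →ₐ[ℂ] Pz)
    (hΦ : ∀ (f : MvPowerSeries (Fin (k + 1)) ℂ) (N : ℕ),
      PowerSeries.coeff (R := Lz) N (Φ f) =
        ∑ m ∈ Finset.Nat.antidiagonalTuple (k + 1) N,
          MvPowerSeries.coeff (R := ℂ) (Finsupp.equivFunOnFinite.symm m) f •
            LaurentPolynomial.T (∑ i : Fin (k + 1), ((i : ℕ) : ℤ) * (m i : ℤ))) (f : MvPowerSeries (Fin (k + 1)) ℂ) (N : ℕ) (l : ℤ) :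
    coeffP l N (Φ f) = ∑ m ∈ Finset.Nat.antidiagonalTuple (k + 1) N,
      if (∑ i : Fin (k + 1), ((i : ℕ) : ℤ) * (m i : ℤ)) = l then
        MvPowerSeries.coeff (R := ℂ) (Finsupp.equivFunOnFinite.symm m) f else 0 := by
  simp only [coeffP, LinearMap.comp_apply, LinearMap.restrictScalars_apply]
  rw [hΦ, map_sum]
  refine Finset.sum_congr rfl fun m _ => ?_
  rw [map_smul, coeffL_T]
  simp

theorem range_eq (k : ℕ) (Φ : MvPowerSeries (Fin (k + 1)) ℂ →ₐ[ℂ] Pz)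
    (hΦ : ∀ (f : MvPowerSeries (Fin (k + 1)) ℂ) (N : ℕ),
      PowerSeries.coeff (R := Lz) N (Φ f) =
        ∑ m ∈ Finset.Nat.antidiagonalTuple (k + 1) N,
          MvPowerSeries.coeff (R := ℂ) (Finsupp.equivFunOnFinite.symm m) f •
            LaurentPolynomial.T (∑ i : Fin (k + 1), ((i : ℕ) : ℤ) * (m i : ℤ))) : Set.range ⇑Φ = ↑(OUinf ⊓ OVinf k) := by
  apply Set.Subset.antisymm
  · rintro _ ⟨f, rfl⟩
    constructor
    · intro N l hl
      rw [coeffP_Phi k Φ hΦ]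
      refine Finset.sum_eq_zero fun m _ => if_neg ?_
      have : 0 ≤ ∑ i : Fin (k + 1), ((i : ℕ) : ℤ) * (m i : ℤ) :=
        Finset.sum_nonneg fun i _ => by positivity
      omega
    · intro N l hl
      rw [coeffP_Phi k Φ hΦ]
      refine Finset.sum_eq_zero fun m hm => if_neg ?_
      have hm := Finset.Nat.mem_antidiagonalTuple.1 hm
      have : ∑ i : Fin (k + 1), ((i : ℕ) : ℤ) * (m i : ℤ) ≤ ∑ i : Fin (k+1), (k : ℤ) * (m i : ℤ) := by
        refine Finset.sum_le_sum fun i _ => mul_le_mul_of_nonneg_right ?_ (by positivity)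
        have := i.2
        omega
      rw [← Finset.mul_sum, ← Nat.cast_sum, hm] at this
      omega
  · rintro p ⟨hU, hV⟩
    have hnf : ∀ (N : ℕ) (l : ℤ), ∃ m : Fin (k+1) → ℕ, 0 ≤ l → l ≤ k * N → 
        ∑ i, m i = N ∧ ∑ i : Fin (k + 1), ((i : ℕ) : ℤ) * (m i : ℤ) = l := by
      intro N l
      by_cases h : 0 ≤ l ∧ l ≤ k * N
      · obtain ⟨m, h1, h2⟩ := exists_nf k N l.toNat (by zify; rw [Int.toNat_of_nonneg h.1]; exact h.2)
        refine ⟨m, fun _ _ => ⟨h1, ?_⟩⟩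
        zify at h2
        rw [h2, Int.toNat_of_nonneg h.1]
      · exact ⟨0, fun h1 h2 => absurd ⟨h1, h2⟩ h⟩
    choose nf hnf using hnf
    classical
    let W : (Fin (k+1) → ℕ) → ℤ := fun m => ∑ i : Fin (k + 1), ((i : ℕ) : ℤ) * (m i : ℤ)
    let f : MvPowerSeries (Fin (k + 1)) ℂ := fun m =>
      if (⇑m) = nf (∑ i, m i) (W m) then coeffP (W m) (∑ i, m i) p else 0
    have hf : ∀ m : Fin (k+1) → ℕ, MvPowerSeries.coeff (Finsupp.equivFunOnFinite.symm m) f =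
      if m = nf (∑ i, m i) (W m) then coeffP (W m) (∑ i, m i) p else 0 := fun m => rfl
    refine ⟨f, ?_⟩
    ext1 N
    apply coeffL_ext
    intro l
    change coeffP l N (Φ f) = coeffP l N p
    rw [coeffP_Phi k Φ hΦ]
    by_cases h : 0 ≤ l ∧ l ≤ k * N
    · obtain ⟨h1, h2⟩ := hnf N l h.1 h.2
      rw [Finset.sum_eq_single (nf N l)]
      · rw [if_pos h2, hf, h1]
        have : W (nf N l) = l := h2
        rw [this, if_pos rfl]
      · intro m hm hne
        have hm := Finset.Nat.mem_antidiagonalTuple.1 hm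
        split_ifs with hw
        · have : W m = l := hw
          rw [hf, hm, this, if_neg hne]
        · rfl
      · intro hm
        exact absurd (Finset.Nat.mem_antidiagonalTuple.2 h1) hm
    · have hp : coeffP l N p = 0 := by
        by_cases h0 : l < 0
        · exact hU N l h0
        · exact hV N l (by push Not at h h0; exact h h0)
      rw [hp]
      refine Finset.sum_eq_zero fun m hm => ?_
      have hm := Finset.Nat.mem_antidiagonalTuple.1 hm
      split_ifs with hw
      · have : W m = l := hw
        rw [hf, hm, this, hp, ite_self]
      · rfl

theorem Phi_X (k : ℕ) (Φ : MvPowerSeries (Fin (k + 1)) ℂ →ₐ[ℂ] Pz)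
    (hΦ : ∀ (f : MvPowerSeries (Fin (k + 1)) ℂ) (N : ℕ),
      PowerSeries.coeff (R := Lz) N (Φ f) =
        ∑ m ∈ Finset.Nat.antidiagonalTuple (k + 1) N,
          MvPowerSeries.coeff (R := ℂ) (Finsupp.equivFunOnFinite.symm m) f •
            LaurentPolynomial.T (∑ i : Fin (k + 1), ((i : ℕ) : ℤ) * (m i : ℤ))) (i : Fin (k+1)) : Φ (MvPowerSeries.X i) = mon (i : ℕ) 1 := by
  classical
  ext1 N
  rw [hΦ, mon, PowerSeries.coeff_monomial]
  have hs : ∀ m : Fin (k+1) → ℕ, Finsupp.equivFunOnFinite.symm m = Finsupp.single i 1 ↔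
      m = Pi.single i 1 := by
    intro m
    rw [Equiv.symm_apply_eq, Finsupp.equivFunOnFinite_single]
  simp only [MvPowerSeries.coeff_X, hs, ite_smul, zero_smul, one_smul, Finset.sum_ite_eq',
    Finset.Nat.mem_antidiagonalTuple]
  simp [Pi.single_apply, eq_comm]

def genf (k : ℕ) : {p : Fin (k+1) × Fin (k+1) // (p.1 : ℕ) + 2 ≤ p.2} → MvPowerSeries (Fin (k+1)) ℂ :=
  fun p => MvPowerSeries.X p.1.1 * MvPowerSeries.X p.1.2 -
    MvPowerSeries.X ⟨p.1.1 + 1, by have := p.2; omega⟩ *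
      MvPowerSeries.X ⟨p.1.2 - 1, by omega⟩

theorem genf_deg (k : ℕ) (p) (a : Fin (k+1) →₀ ℕ) (h : MvPowerSeries.coeff a (genf k p) ≠ 0) :
    a.degree = 2 := by
  classical
  by_contra hc
  apply h
  have : ∀ i j : Fin (k+1), a ≠ Finsupp.single i 1 + Finsupp.single j 1 := by
    rintro i j rfl
    apply hc
    simp
  simp only [genf, MvPowerSeries.X, MvPowerSeries.monomial_mul_monomial, map_sub,
    MvPowerSeries.coeff_monomial]
  rw [if_neg (this _ _), if_neg (this _ _), sub_zero]

theorem ker_eq (k : ℕ) (Φ : MvPowerSeries (Fin (k + 1)) ℂ →ₐ[ℂ] Pz)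
    (hΦ : ∀ (f : MvPowerSeries (Fin (k + 1)) ℂ) (N : ℕ),
      PowerSeries.coeff (R := Lz) N (Φ f) =
        ∑ m ∈ Finset.Nat.antidiagonalTuple (k + 1) N,
          MvPowerSeries.coeff (R := ℂ) (Finsupp.equivFunOnFinite.symm m) f •
            LaurentPolynomial.T (∑ i : Fin (k + 1), ((i : ℕ) : ℤ) * (m i : ℤ))) : RingHom.ker Φ = Ideal.span (Set.range (genf k)) := by
  classical
  apply le_antisymm
  · intro f hf
    rw [RingHom.mem_ker] at hf
    apply mem_span_of_components _ (genf_deg k)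
    intro N
    refine ⟨∑ m ∈ Finset.Nat.antidiagonalTuple (k + 1) N,
      MvPowerSeries.coeff (R := ℂ) (Finsupp.equivFunOnFinite.symm m) f •
        MvPowerSeries.monomial (Finsupp.equivFunOnFinite.symm m) 1, ?_, ?_⟩
    · set I := Ideal.span (Set.range (genf k)) with hI
      let q := Ideal.Quotient.mkₐ ℂ I
      let y : ℕ → (MvPowerSeries (Fin (k+1)) ℂ ⧸ I) := fun i =>
        if h : i < k + 1 then q (MvPowerSeries.X ⟨i, h⟩) else 0
      have hyX : ∀ i : Fin (k+1), y i = q (MvPowerSeries.X i) := fun i => dif_pos i.2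
      have hy : ∀ i j, i + 2 ≤ j → j ≤ k → y i * y j = y (i+1) * y (j-1) := by
        intro i j h1 h2
        simp only [y]
        rw [dif_pos (by omega), dif_pos (by omega), dif_pos (by omega), dif_pos (by omega),
          ← map_mul, ← map_mul]
        refine Ideal.Quotient.eq.2 (Ideal.subset_span ?_)
        exact ⟨⟨(⟨i, by omega⟩, ⟨j, by omega⟩), h1⟩, rfl⟩
      have hex : ∀ l : ℤ, ∃ b : MvPowerSeries (Fin (k+1)) ℂ ⧸ I, ∀ m : Fin (k+1) → ℕ,
          ∑ i, m i = N → ∑ i : Fin (k + 1), ((i : ℕ) : ℤ) * (m i : ℤ) = l →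
          q (MvPowerSeries.monomial (Finsupp.equivFunOnFinite.symm m) 1) = b := by
        intro l
        by_cases h : ∃ m : Fin (k+1) → ℕ, ∑ i, m i = N ∧
          ∑ i : Fin (k + 1), ((i : ℕ) : ℤ) * (m i : ℤ) = l
        · obtain ⟨m', h1, h2⟩ := h
          refine ⟨q (MvPowerSeries.monomial (Finsupp.equivFunOnFinite.symm m') 1), ?_⟩
          intro m h3 h4
          refine monomial_congr k (q : _ →+* _) y hyX hy m m' (by omega) ?_
          zify
          rw [h2, h4]
        · exact ⟨0, fun m h1 h2 => absurd ⟨m, h1, h2⟩ h⟩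
      choose b hb using hex
      let L : Lz →ₗ[ℂ] (MvPowerSeries (Fin (k+1)) ℂ ⧸ I) :=
        (Finsupp.linearCombination ℂ b).comp (AddMonoidAlgebra.coeffLinearEquiv ℂ).toLinearMap
      have hL : ∀ l, L (LaurentPolynomial.T l) = b l := by
        intro l
        exact (Finsupp.linearCombination_single ℂ (1 : ℂ) l).trans (one_smul ℂ _)
      have h0 := hΦ f N
      rw [hf, map_zero] at h0
      have h1 := congrArg L h0
      rw [map_zero, map_sum] at h1
      rw [← Ideal.Quotient.eq_zero_iff_mem]
      change q _ = 0
      rw [map_sum, h1]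
      refine Finset.sum_congr rfl fun m hm => ?_
      rw [map_smul, map_smul, hL, hb _ m (Finset.Nat.mem_antidiagonalTuple.1 hm) rfl]
    · intro m hm
      rw [map_sum, Finset.sum_eq_single (⇑m)]
      · have : Finsupp.equivFunOnFinite.symm (⇑m) = m := by ext; simp
        rw [this, map_smul, MvPowerSeries.coeff_monomial_same, smul_eq_mul, mul_one]
      · intro m' _ hne
        rw [map_smul, MvPowerSeries.coeff_monomial_ne, smul_zero]
        rintro rfl
        exact hne rfl
      · intro h
        refine absurd (Finset.Nat.mem_antidiagonalTuple.2 ?_) h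
        rw [← hm, Finsupp.degree_eq_sum]
  · rw [Ideal.span_le]
    rintro _ ⟨⟨⟨i, j⟩, h⟩, rfl⟩
    simp only at h
    change Φ _ = 0
    simp only [genf, map_sub, map_mul, Phi_X k Φ hΦ, mon, PowerSeries.monomial_mul_monomial,
      ← LaurentPolynomial.T_add]
    rw [sub_eq_zero]
    congr 2
    push_cast [Nat.cast_sub (show 1 ≤ (j : ℕ) by omega)]
    ring

/-- let `Φ : ℂ[[x₀,…,x_k]] → P` be the continuous `ℂ`-algebra homomorphism
substituting `x_i ↦ z^i·u` (pinned down coefficientwise: the `u^N`-coefficient of `Φ f` is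
`Σ_{|m| = N} f_m z^{Σ i·mᵢ}`).  Its image is exactly `O_U^∞ ∩ O_V^∞` (the ring of global
functions on `Ẑ_k`) and its kernel is the ideal generated by the `x_i x_j − x_{i+1} x_{j−1}`
for `0 ≤ i ≤ k − 2`, `i + 2 ≤ j ≤ k`. -/
theorem statement14 (k : ℕ) (hk : 1 ≤ k)
    (Φ : MvPowerSeries (Fin (k + 1)) ℂ →ₐ[ℂ] Pz)
    (hΦ : ∀ (f : MvPowerSeries (Fin (k + 1)) ℂ) (N : ℕ),
      PowerSeries.coeff (R := Lz) N (Φ f) =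
        ∑ m ∈ Finset.Nat.antidiagonalTuple (k + 1) N,
          MvPowerSeries.coeff (R := ℂ) (Finsupp.equivFunOnFinite.symm m) f •
            LaurentPolynomial.T (∑ i : Fin (k + 1), ((i : ℕ) : ℤ) * (m i : ℤ))) :
    Set.range ⇑Φ = ↑(OUinf ⊓ OVinf k) ∧
    RingHom.ker Φ = Ideal.span
      {f | ∃ i j : ℕ, ∃ (_ : i + 2 ≤ k) (_ : j ≤ k) (_ : i + 2 ≤ j),
        f = MvPowerSeries.X (⟨i, by omega⟩ : Fin (k + 1)) * MvPowerSeries.X ⟨j, by omega⟩ -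
            MvPowerSeries.X ⟨i + 1, by omega⟩ * MvPowerSeries.X ⟨j - 1, by omega⟩} := by
  refine ⟨range_eq k Φ hΦ, (ker_eq k Φ hΦ).trans (congrArg Ideal.span ?_)⟩
  ext f
  constructor
  · rintro ⟨⟨⟨i, j⟩, h⟩, rfl⟩
    simp only at h
    exact ⟨i, j, by omega, by omega, h, rfl⟩
  · rintro ⟨i, j, h1, h2, h3, rfl⟩
    exact ⟨⟨(⟨i, by omega⟩, ⟨j, by omega⟩), h3⟩, rfl⟩
end
end
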